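/- For all x, y ∈ ℝ, lim_{n→∞} [P(ρ_{1n}|X| + √(1-ρ_{1n}²)·Y ≤ a_n·x + b_n + a_n·ln 2, ρ_{2n}|X| + √(1-ρ_{2n}²)·Y ≤ a_n·y + b_n + a_n·ln 2)]^n = H_λ(x, y) with λ = |λ₁ - λ₂|, where H_λ(x,y) = exp(-Φ(λ + (x-y)/(2λ))·e^{-y} - Φ(λ + (y-x)/(2λ))·e^{-x}) and Φ is the standard normal distribution function. -/

import Mathlib

open MeasureTheory Filter Real Set ProbabilityTheory Topology

noncomputable def stdNormalCDF (t : ℝ) : ℝ :=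
  (Real.sqrt (2 * Real.pi))⁻¹ * ∫ s in Set.Iic t, Real.exp (-(s ^ 2) / 2)

/-!
For `ρ = cos α` with `α ∈ [0, π / 2]`, the point of polar coordinates `(R, Θ)` in the half-plane
`X ≥ 0` satisfies `ρ |X| + √(1 - ρ²) Y = R cos (Θ - α)`, and reflecting `X` gives the same event in
the other half-plane. Conditioning on the angle, the probability that one of the two margins exceeds
its threshold becomes an integral over the angle of the maximum of the two radial tails
`P(R cos (θ - αᵢ) > uᵢ)`. The Gumbel condition localizes this integral at angles of order
`v = √(a / b)`: at `θ = v t`, with `αᵢ ≈ 2 λᵢ v`, the radial threshold moves up by about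
`(t - 2 λᵢ)² a / 2`, so that after division by `P(R > b)` the integrand tends to the maximum of two
Gaussian profiles centred at `2 λ₁` and `2 λ₂`. Dominated convergence applies because a Gumbel tail
decays at least like `1 / (1 + z)` along `u + z a`, uniformly for `u` near the endpoint. Integrating
each Gaussian profile over the half-line where it is the larger one gives the Hüsler–Reiss
exponent, and the same asymptotics for `X` alone turns the normalization `P(X > b) = 1 / n` into
the Poisson limit; the shift by `log 2` accounts for the two half-planes.
-/

section MonotoneLimits

variable {ι α β : Type*} [TopologicalSpace α] [TopologicalSpace β] [LinearOrder β]

theorem tendsto_apply_of_antitone [LinearOrder α] [OrderTopology α] [DenselyOrdered α]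
    [NoMinOrder α] [NoMaxOrder α] [OrderTopology β] {p : Filter ι} {f : ι → α → β} {g : α → β}
    {z : ι → α} {z₀ : α} (hf : ∀ i, Antitone (f i)) (hg : ContinuousAt g z₀)
    (hfg : ∀ s, Tendsto (f · s) p (𝓝 (g s))) (hz : Tendsto z p (𝓝 z₀)) :
    Tendsto (fun i => f i (z i)) p (𝓝 (g z₀)) := by
  refine tendsto_order.2 ⟨fun y hy => ?_, fun y hy => ?_⟩
  · obtain ⟨s, hys, hs⟩ := (((hg.eventually (lt_mem_nhds hy)).filter_mono
      nhdsWithin_le_nhds).and (self_mem_nhdsWithin (s := Ioi z₀))).exists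
    filter_upwards [(hfg s).eventually (lt_mem_nhds hys), hz.eventually (gt_mem_nhds hs)]
      with i hi hzi using hi.trans_le (hf i hzi.le)
  · obtain ⟨s, hys, hs⟩ := (((hg.eventually (gt_mem_nhds hy)).filter_mono
      nhdsWithin_le_nhds).and (self_mem_nhdsWithin (s := Iio z₀))).exists
    filter_upwards [(hfg s).eventually (gt_mem_nhds hys), hz.eventually (lt_mem_nhds hs)]
      with i hi hzi using (hf i hzi.le).trans_lt hi

theorem apply_sInf_setOf_lt [ConditionallyCompleteLinearOrder α] [OrderTopology α]
    [DenselyOrdered α] [NoMinOrder α] [OrderTopology β] {f : α → β} (hf : Continuous f)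
    {q : β} (hne : {x | q < f x}.Nonempty) (hbdd : BddBelow {x | q < f x}) :
    f (sInf {x | q < f x}) = q := by
  refine le_antisymm (not_lt.1 fun hlt => ?_) ?_
  · obtain ⟨x, hqx, hx⟩ := (((hf.tendsto _).eventually (lt_mem_nhds hlt)).filter_mono
      nhdsWithin_le_nhds |>.and (self_mem_nhdsWithin (s := Iio (sInf {x | q < f x})))).exists
    exact hx.not_ge (csInf_le hbdd hqx)
  · exact closure_minimal (fun x hx => le_of_lt hx) (isClosed_le continuous_const hf)
      (csInf_mem_closure hne hbdd)

end MonotoneLimits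

section Cdf

variable (P : Measure ℝ) [IsProbabilityMeasure P] [NullSingletonClass P]

theorem continuous_cdf : Continuous (cdf P) := by
  refine continuous_iff_continuousAt.2 fun c => ?_
  rw [(monotone_cdf P).continuousAt_iff_leftLim_eq_rightLim, StieltjesFunction.rightLim_eq]
  have hjump : (cdf P).measure {c} = 0 := by rw [measure_cdf, measure_singleton]
  rw [StieltjesFunction.measure_singleton, ENNReal.ofReal_eq_zero] at hjump
  linarith [(monotone_cdf P).leftLim_le (le_refl c)]

theorem measureReal_Iic_sInf_eq {q : ℝ} (hq₀ : 0 < q) (hq₁ : q < 1) :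
    P.real (Iic (sInf {x | q < P.real (Iic x)})) = q := by
  simp_rw [← cdf_eq_real]
  obtain ⟨c, hc⟩ := ((tendsto_cdf_atBot P).eventually (gt_mem_nhds hq₀)).exists
  exact apply_sInf_setOf_lt (continuous_cdf P)
    ((tendsto_cdf_atTop P).eventually (lt_mem_nhds hq₁)).exists
    ⟨c, fun x hx => ((monotone_cdf P).reflect_lt (hc.trans hx)).le⟩

end Cdf

/-- `T` is the tail `u ↦ 1 - F u` of a distribution in the Gumbel max-domain of attraction with
auxiliary function `a = 1 / w`. The filter `l` encodes `u ↑ x_F`: since `T c` is positive exactly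
for `c < x_F`, the sets `{u | c < u ∧ 0 < T u}` are the left neighbourhoods of the upper
endpoint, finite or not. -/
structure IsGumbelTail (T a : ℝ → ℝ) (l : Filter ℝ) : Prop where
  antitone : Antitone T
  nonneg : ∀ u, 0 ≤ T u
  scale_pos : ∀ u, 0 < a u
  hasBasis : l.HasBasis (fun c => 0 < T c) fun c => {u | c < u ∧ 0 < T u}
  tendsto_ratio : ∀ s, Tendsto (fun u => T (u + s * a u) / T u) l (𝓝 (exp (-s)))

theorem hasBasis_of_upperEndpoint {F : ℝ → ℝ} {l : Filter ℝ}
    (h : (l = atTop ∧ ∀ x, F x < 1) ∨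
      ∃ xF, l = 𝓝[<] xF ∧ (∀ x < xF, F x < 1) ∧ ∀ x, xF ≤ x → F x = 1) :
    l.HasBasis (fun c => 0 < 1 - F c) fun c => {u | c < u ∧ 0 < 1 - F u} := by
  simp only [sub_pos]
  obtain ⟨rfl, hF⟩ | ⟨xF, rfl, hlt, heq⟩ := h
  · simpa [hF, Ioi_def] using atTop_basis_Ioi (α := ℝ)
  · have hF : ∀ x, F x < 1 ↔ x < xF :=
      fun x => ⟨fun hx => not_le.1 fun hle => hx.ne (heq x hle), hlt x⟩
    simp only [hF]
    exact nhdsLT_basis xF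

namespace IsGumbelTail

variable {T a : ℝ → ℝ} {l : Filter ℝ}

theorem eventually_gt (h : IsGumbelTail T a l) {c : ℝ} (hc : 0 < T c) : ∀ᶠ u in l, c < u :=
  h.hasBasis.eventually_iff.2 ⟨c, hc, fun _ hu => hu.1⟩

theorem eventually_pos (h : IsGumbelTail T a l) : ∀ᶠ u in l, 0 < T u :=
  let ⟨c, hc⟩ := h.hasBasis.ex_mem
  h.hasBasis.eventually_iff.2 ⟨c, hc, fun _ hu => hu.2⟩

theorem eventually_tail_lt (h : IsGumbelTail T a l) {s q : ℝ} (hq : exp (-s) < q) :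
    ∀ᶠ u in l, T (u + s * a u) < q * T u := by
  filter_upwards [(h.tendsto_ratio s).eventually (gt_mem_nhds hq), h.eventually_pos] with u hu hT
  rwa [div_lt_iff₀ hT] at hu

theorem eventually_lt_tail (h : IsGumbelTail T a l) {s q : ℝ} (hq : q < exp (-s)) :
    ∀ᶠ u in l, q * T u < T (u + s * a u) := by
  filter_upwards [(h.tendsto_ratio s).eventually (lt_mem_nhds hq), h.eventually_pos] with u hu hT
  rwa [lt_div_iff₀ hT] at hu

theorem eventually_pos_add (h : IsGumbelTail T a l) : ∀ᶠ u in l, 0 < T (u + a u) := by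
  filter_upwards [h.eventually_lt_tail (exp_pos (-1))] with u hu
  simpa using hu

theorem tendsto_add_scale (h : IsGumbelTail T a l) : Tendsto (fun u => u + a u) l l := by
  refine h.hasBasis.tendsto_right_iff.2 fun c hc => ?_
  filter_upwards [h.eventually_gt hc, h.eventually_pos_add] with u hcu hT
  exact ⟨by linarith [h.scale_pos u], hT⟩

theorem eventually_tail_add_le (h : IsGumbelTail T a l) :
    ∀ᶠ u in l, T (u + a u) ≤ T u / 2 := by
  have hexp : exp (-1) < 1 / 2 := by
    rw [exp_neg, inv_lt_comm₀ (exp_pos _) (by norm_num)]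
    simpa using exp_one_gt_two
  filter_upwards [h.eventually_tail_lt hexp] with u hu
  rw [one_mul] at hu
  linarith

-- Were `a (u + a u) > 2 * a u`, two unit steps from `u` would overshoot `u + 3 * a u`, although
-- they lose only a factor close to `exp (-2)` while `T (u + 3 * a u)` is close to `exp (-3) * T u`.
theorem eventually_scale_add_le (h : IsGumbelTail T a l) :
    ∀ᶠ u in l, a (u + a u) ≤ 2 * a u := by
  have hstep := h.eventually_lt_tail (s := 1) (exp_lt_exp.2 (by norm_num : (-5 / 4 : ℝ) < -1))
  have hthree := h.eventually_tail_lt (s := 3) (exp_lt_exp.2 (by norm_num : (-3 : ℝ) < -5 / 2))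
  filter_upwards [hstep, h.tendsto_add_scale.eventually hstep, hthree] with u hu hu' hu₃
  by_contra! hlt
  rw [one_mul] at hu hu'
  have hover : T (u + a u + a (u + a u)) ≤ T (u + 3 * a u) := h.antitone (by linarith)
  have htwo : exp (-5 / 2) * T u ≤ exp (-5 / 4) * T (u + a u) := by
    calc exp (-5 / 2) * T u = exp (-5 / 4) * (exp (-5 / 4) * T u) := by
          rw [← mul_assoc, ← exp_add]; norm_num
      _ ≤ exp (-5 / 4) * T (u + a u) := by gcongr
  linarith

theorem eventually_forall_iterate (h : IsGumbelTail T a l) {P : ℝ → Prop}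
    (hP : ∀ᶠ u in l, P u) : ∀ᶠ u in l, ∀ k, P ((fun u => u + a u)^[k] u) := by
  obtain ⟨c, hc, hcP⟩ := h.hasBasis.eventually_iff.1 (hP.and h.eventually_pos_add)
  refine h.hasBasis.eventually_iff.2 ⟨c, hc, fun u hu k => (hcP ?_).1⟩
  induction k with
  | zero => exact hu
  | succ k ih =>
    rw [Function.iterate_succ_apply']
    exact ⟨ih.1.trans (lt_add_of_pos_right _ (h.scale_pos _)), (hcP ih).2⟩

theorem eventually_iterate_le (h : IsGumbelTail T a l) :
    ∀ᶠ u in l, ∀ k, T ((fun u => u + a u)^[k] u) ≤ T u / 2 ^ k ∧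
      (fun u => u + a u)^[k] u ≤ u + (2 ^ k - 1) * a u := by
  filter_upwards [h.eventually_forall_iterate h.eventually_tail_add_le,
    h.eventually_forall_iterate h.eventually_scale_add_le] with u hhalf hdouble
  have hscale : ∀ k, a ((fun u => u + a u)^[k] u) ≤ 2 ^ k * a u := by
    intro k
    induction k with
    | zero => simp
    | succ k ih =>
      rw [Function.iterate_succ_apply', pow_succ']
      linarith [hdouble k]
  intro k
  induction k with
  | zero => simp
  | succ k ih =>
    rw [Function.iterate_succ_apply', pow_succ, ← div_div]
    constructor
    · linarith [hhalf k, ih.1]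
    · linarith [hscale k, ih.2]

theorem tendsto_tail_zero (h : IsGumbelTail T a l) [l.NeBot] : Tendsto T l (𝓝 0) := by
  refine tendsto_order.2 ⟨fun y hy => .of_forall fun u => hy.trans_le (h.nonneg u),
    fun ε hε => ?_⟩
  obtain ⟨u, hu, hpos⟩ :=
    (h.eventually_iterate_le.and (h.eventually_forall_iterate h.eventually_pos)).exists
  have hpow : Tendsto (fun k : ℕ => T u * (1 / 2 : ℝ) ^ k) atTop (𝓝 0) := by
    simpa using (tendsto_pow_atTop_nhds_zero_of_lt_one (r := (1 / 2 : ℝ)) (by norm_num)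
      (by norm_num)).const_mul (T u)
  obtain ⟨k, hk⟩ := (hpow.eventually (gt_mem_nhds hε)).exists
  rw [one_div_pow, mul_one_div] at hk
  filter_upwards [h.eventually_gt (hpos k)] with y hy
  exact ((h.antitone hy.le).trans (hu k).1).trans_lt hk

theorem eventually_tail_sub_le (h : IsGumbelTail T a l) (M : ℝ) :
    ∀ᶠ u in l, T (u - M * a u) ≤ 2 * exp M * T u := by
  have hexp : exp (- -M) < 2 * exp M := by rw [neg_neg]; linarith [exp_pos M]
  filter_upwards [h.eventually_tail_lt hexp] with u hu
  rw [neg_mul, ← sub_eq_add_neg] at hu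
  exact hu.le

theorem eventually_mul_scale_lt (h : IsGumbelTail T a l) [l.NeBot] (h₀ : 0 < T 0) (M : ℝ) :
    ∀ᶠ u in l, M * a u < u := by
  have hzero : Tendsto (fun u => 2 * exp M * T u) l (𝓝 0) := by
    simpa using h.tendsto_tail_zero.const_mul (2 * exp M)
  filter_upwards [h.eventually_tail_sub_le M, hzero.eventually (gt_mem_nhds h₀)] with u hM hu
  exact sub_pos.1 (h.antitone.reflect_lt (hM.trans_lt hu))

theorem tendsto_scale_div_self (h : IsGumbelTail T a l) [l.NeBot] (h₀ : 0 < T 0) :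
    Tendsto (fun u => a u / u) l (𝓝 0) := by
  refine tendsto_order.2 ⟨fun y hy => ?_, fun ε hε => ?_⟩
  · filter_upwards [h.eventually_gt h₀] with u hu using hy.trans (div_pos (h.scale_pos u) hu)
  · filter_upwards [h.eventually_gt h₀, h.eventually_mul_scale_lt h₀ ε⁻¹] with u hu hlt
    rwa [inv_mul_lt_iff₀ hε, ← div_lt_iff₀ hu] at hlt

theorem eventually_half_lt_add (h : IsGumbelTail T a l) [l.NeBot] (h₀ : 0 < T 0) (x : ℝ) :
    ∀ᶠ u in l, u / 2 < u + x * a u := by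
  filter_upwards [h.eventually_mul_scale_lt h₀ (-2 * x)] with u hu
  linarith

theorem eventually_tail_add_mul_le (h : IsGumbelTail T a l) :
    ∀ᶠ u in l, ∀ z, 0 ≤ z → T (u + z * a u) ≤ 2 / (1 + z) * T u := by
  filter_upwards [h.eventually_iterate_le] with u hu z hz
  obtain ⟨k, hk, hk'⟩ := exists_nat_pow_near (by linarith : 1 ≤ 1 + z) one_lt_two
  have hreach : (fun u => u + a u)^[k] u ≤ u + z * a u := by
    refine (hu k).2.trans ?_
    have := (h.scale_pos u).le
    gcongr
    linarith
  have hfactor : 1 / 2 ^ k ≤ 2 / (1 + z) := by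
    rw [div_le_div_iff₀ (by positivity) (by positivity)]
    linarith [pow_succ (2 : ℝ) k]
  calc T (u + z * a u) ≤ T u / 2 ^ k := (h.antitone hreach).trans (hu k).1
    _ = 1 / 2 ^ k * T u := by ring
    _ ≤ 2 / (1 + z) * T u := mul_le_mul_of_nonneg_right hfactor (h.nonneg u)

theorem exists_eventually_tail_le (h : IsGumbelTail T a l) {M : ℝ} (hM : 0 ≤ M) :
    ∃ C, 0 ≤ C ∧ ∀ᶠ u in l, ∀ z, 0 ≤ z → T (u + (z - M) * a u) ≤ C / (1 + z) * T u := by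
  refine ⟨2 * exp M * (1 + M), by positivity, ?_⟩
  filter_upwards [h.eventually_tail_add_mul_le, h.eventually_tail_sub_le M] with u hadd hsub z hz
  have ha := h.scale_pos u
  have hT := h.nonneg u
  rcases le_total z M with hzM | hMz
  · calc T (u + (z - M) * a u) ≤ T (u - M * a u) := h.antitone (by nlinarith)
      _ ≤ 2 * exp M * T u := hsub
      _ ≤ 2 * exp M * (1 + M) / (1 + z) * T u := by
        gcongr
        rw [le_div_iff₀ (by positivity)]
        gcongr
  · refine (hadd (z - M) (sub_nonneg.2 hMz)).trans (mul_le_mul_of_nonneg_right ?_ hT)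
    calc 2 / (1 + (z - M)) ≤ 2 * (1 + M) / (1 + z) := by
          rw [div_le_div_iff₀ (by linarith) (by linarith)]
          nlinarith
      _ ≤ 2 * exp M * (1 + M) / (1 + z) := by
          gcongr
          linarith [one_le_exp hM]

theorem tendsto_ratio_of_tendsto (h : IsGumbelTail T a l) {ι : Type*} {p : Filter ι}
    {b z : ι → ℝ} {z₀ : ℝ} (hb : Tendsto b p l) (hz : Tendsto z p (𝓝 z₀)) :
    Tendsto (fun i => T (b i + z i * a (b i)) / T (b i)) p (𝓝 (exp (-z₀))) := by
  refine tendsto_apply_of_antitone (f := fun i s => T (b i + s * a (b i)) / T (b i))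
    (g := fun s => exp (-s)) (fun i s t hst => ?_) (by fun_prop)
    (fun s => (h.tendsto_ratio s).comp hb) hz
  have := (h.scale_pos (b i)).le
  exact div_le_div_of_nonneg_right (h.antitone (by gcongr)) (h.nonneg _)

end IsGumbelTail

section SmallAngles

theorem one_sub_cos_eq_mul_sinc_sq (θ : ℝ) : 1 - cos θ = θ ^ 2 / 2 * sinc (θ / 2) ^ 2 := by
  rcases eq_or_ne θ 0 with rfl | hθ
  · simp
  · have hcos := cos_two_mul (θ / 2)
    rw [mul_div_cancel₀ θ two_ne_zero] at hcos
    rw [sinc_of_ne_zero (by simpa using hθ)]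
    field_simp
    linarith [sin_sq_add_cos_sq (θ / 2)]

theorem one_add_sq_div_five_le_inv_cos {θ : ℝ} (hθ : |θ| ≤ π) (hcos : 0 < cos θ) :
    1 + θ ^ 2 / 5 ≤ (cos θ)⁻¹ := by
  have hπ : 1 / 5 ≤ 2 / π ^ 2 := by
    rw [div_le_div_iff₀ (by norm_num) (by positivity)]
    nlinarith [pi_lt_d2, pi_pos]
  have hle : cos θ ≤ 1 - θ ^ 2 / 5 :=
    (cos_le_one_sub_mul_cos_sq hθ).trans (by nlinarith [sq_nonneg θ])
  rw [le_inv_comm₀ (by positivity) hcos, ← one_div, le_div_iff₀ (by positivity)]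
  nlinarith [sq_nonneg θ]

variable {ι : Type*} {p : Filter ι} {v θ : ι → ℝ}

theorem tendsto_zero_of_tendsto_div {s : ℝ} (hv : Tendsto v p (𝓝[≠] 0))
    (hθ : Tendsto (fun i => θ i / v i) p (𝓝 s)) : Tendsto θ p (𝓝 0) := by
  obtain ⟨hv₀, hne⟩ := tendsto_nhdsWithin_iff.1 hv
  rw [← mul_zero s]
  refine (hθ.mul hv₀).congr' ?_
  filter_upwards [hne] with i hi using div_mul_cancel₀ _ hi

theorem tendsto_sinc_half (hθ : Tendsto θ p (𝓝 0)) :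
    Tendsto (fun i => sinc (θ i / 2)) p (𝓝 1) := by
  simpa [Function.comp_def] using
    (continuous_sinc.tendsto 0).comp (by simpa using hθ.div_const 2)

theorem tendsto_one_sub_cos_div_sq {s : ℝ} (hv : Tendsto v p (𝓝[≠] 0))
    (hθ : Tendsto (fun i => θ i / v i) p (𝓝 s)) :
    Tendsto (fun i => (1 - cos (θ i)) / v i ^ 2) p (𝓝 (s ^ 2 / 2)) := by
  have hsinc := tendsto_sinc_half (tendsto_zero_of_tendsto_div hv hθ)
  have hlim := ((hθ.pow 2).div_const 2).mul (hsinc.pow 2)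
  rw [one_pow, mul_one] at hlim
  refine hlim.congr fun i => ?_
  rw [one_sub_cos_eq_mul_sinc_sq]
  ring

theorem tendsto_arccos_div {ρ : ι → ℝ} {k : ℝ} (hk : 0 ≤ k) (hv : Tendsto v p (𝓝[>] 0))
    (hρ : ∀ i, ρ i ≤ 1) (hlim : Tendsto (fun i => (1 - ρ i) / v i ^ 2) p (𝓝 (2 * k ^ 2))) :
    Tendsto (fun i => arccos (ρ i) / v i) p (𝓝 (2 * k)) := by
  have hv₂ : Tendsto (fun i => v i ^ 2) p (𝓝[≠] 0) := by
    obtain ⟨hv₀, hpos⟩ := tendsto_nhdsWithin_iff.1 hv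
    refine tendsto_nhdsWithin_iff.2 ⟨by simpa using hv₀.pow 2, ?_⟩
    filter_upwards [hpos] with i hi using (pow_pos hi 2).ne'
  have hρ₁ : Tendsto ρ p (𝓝 1) := by
    simpa using (tendsto_zero_of_tendsto_div hv₂ hlim).const_sub 1
  have harccos : Tendsto (fun i => arccos (ρ i)) p (𝓝 0) := by
    simpa [Function.comp_def] using (continuous_arccos.tendsto 1).comp hρ₁
  have hsinc := tendsto_sinc_half harccos
  have hquot := (hlim.const_mul 2).sqrt.div hsinc one_ne_zero
  rw [show 2 * (2 * k ^ 2) = (2 * k) ^ 2 by ring, sqrt_sq (by positivity), div_one] at hquot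
  refine hquot.congr' ?_
  filter_upwards [(tendsto_nhdsWithin_iff.1 hv).2, hsinc.eventually (lt_mem_nhds one_pos),
    hρ₁.eventually (lt_mem_nhds (by norm_num : (-1 : ℝ) < 1))] with i hvi hi hρi
  have hsq : 2 * ((1 - ρ i) / v i ^ 2) =
      (arccos (ρ i) / v i * sinc (arccos (ρ i) / 2)) ^ 2 := by
    have hcos := one_sub_cos_eq_mul_sinc_sq (arccos (ρ i))
    rw [cos_arccos hρi.le (hρ i)] at hcos
    rw [hcos]
    ring
  have hnonneg := div_nonneg (arccos_nonneg (ρ i)) (le_of_lt hvi)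
  rw [Pi.div_apply, hsq, sqrt_sq (mul_nonneg hnonneg hi.le), mul_div_cancel_right₀ _ hi.ne']

-- After the substitution `θ = v * t` the domain of integration exhausts the line.
theorem tendsto_inv_smul_intervalIntegral {E : Type*} [NormedAddCommGroup E] [NormedSpace ℝ E]
    [p.IsCountablyGenerated] {f : ι → ℝ → E} {g : ℝ → E} {bound : ℝ → ℝ} {A : ℝ} (hA : 0 < A)
    (hv : Tendsto v p (𝓝[>] 0)) (hf : ∀ i, StronglyMeasurable (f i)) (hbound : Integrable bound)
    (hle : ∀ᶠ i in p, ∀ t, |v i * t| ≤ A → ‖f i (v i * t)‖ ≤ bound t)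
    (hlim : ∀ t, Tendsto (fun i => f i (v i * t)) p (𝓝 (g t))) :
    Tendsto (fun i => (v i)⁻¹ • ∫ θ in (-A)..A, f i θ) p (𝓝 (∫ t, g t)) := by
  obtain ⟨hv₀, hpos⟩ := tendsto_nhdsWithin_iff.1 hv
  have hmem : ∀ i, 0 < v i → ∀ t, t ∈ Ioc (-A / v i) (A / v i) ↔ v i * t ∈ Ioc (-A) A :=
    fun i hi t => by simp only [mem_Ioc, div_lt_iff₀' hi, le_div_iff₀' hi]
  have hdct : Tendsto (fun i => ∫ t, (Ioc (-A / v i) (A / v i)).indicator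
      (fun t => f i (v i * t)) t) p (𝓝 (∫ t, g t)) := by
    refine tendsto_integral_filter_of_dominated_convergence (fun t => ‖bound t‖)
      (.of_forall fun i => (((hf i).comp_measurable (measurable_const_mul _)).indicator
        measurableSet_Ioc).aestronglyMeasurable) ?_ hbound.norm (.of_forall fun t => ?_)
    · filter_upwards [hle, hpos] with i hi hvi
      refine .of_forall fun t => ?_
      by_cases ht : t ∈ Ioc (-A / v i) (A / v i)
      · rw [indicator_of_mem ht]
        rw [hmem i hvi] at ht
        exact (hi t (abs_le.2 ⟨ht.1.le, ht.2⟩)).trans (le_abs_self _)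
      · simp [indicator_of_notMem ht]
    · have hvt : Tendsto (fun i => v i * t) p (𝓝 0) := by simpa using hv₀.mul_const t
      refine (hlim t).congr' ?_
      filter_upwards [hpos, hvt.eventually (Ioc_mem_nhds (neg_neg_of_pos hA) hA)] with i hvi hi
      rw [indicator_of_mem ((hmem i hvi t).2 hi)]
  refine hdct.congr' ?_
  filter_upwards [hpos] with i (hvi : 0 < v i)
  have hend : -A / v i ≤ A / v i := by gcongr; linarith
  rw [integral_indicator measurableSet_Ioc, ← intervalIntegral.integral_of_le hend,
    intervalIntegral.integral_comp_mul_left _ hvi.ne', mul_div_cancel₀ _ hvi.ne',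
    mul_div_cancel₀ _ hvi.ne']

end SmallAngles

/-- The mass `ν` gives to the radii `r` for which the point of polar coordinates `(r, θ)` lies
to the right of the vertical line of abscissa `u`. -/
noncomputable def directionalTail (ν : Measure ℝ) (u θ : ℝ) : ℝ :=
  ν.real {r | u < r * cos θ}

/-- The order of magnitude `√(a u / u)` of the angles at which a point whose radius has Gumbel
tail with auxiliary function `a` gets to the right of the vertical line of abscissa `u`. -/
noncomputable def angularScale (a : ℝ → ℝ) (u : ℝ) : ℝ :=
  √(a u / u)

theorem IsGumbelTail.tendsto_angularScale {T a : ℝ → ℝ} {l : Filter ℝ} [l.NeBot]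
    (h : IsGumbelTail T a l) (h₀ : 0 < T 0) : Tendsto (angularScale a) l (𝓝[>] 0) := by
  have hzero := (h.tendsto_scale_div_self h₀).sqrt
  rw [sqrt_zero] at hzero
  refine tendsto_nhdsWithin_iff.2 ⟨hzero, ?_⟩
  filter_upwards [h.eventually_gt h₀] with u hu using sqrt_pos.2 (div_pos (h.scale_pos u) hu)

section DirectionalTail

variable {ν : Measure ℝ}

theorem directionalTail_of_cos_pos {u θ : ℝ} (hθ : 0 < cos θ) :
    directionalTail ν u θ = ν.real (Ioi (u / cos θ)) := by
  simp only [directionalTail, ← div_lt_iff₀ hθ, Ioi_def]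

theorem directionalTail_of_cos_nonpos (hν : ∀ᵐ r ∂ν, 0 < r) {u θ : ℝ} (hu : 0 ≤ u)
    (hθ : cos θ ≤ 0) : directionalTail ν u θ = 0 := by
  refine (measureReal_congr (t := ∅) ?_).trans measureReal_empty
  refine eventuallyEq_empty.2 ?_
  filter_upwards [hν] with r hr
  exact not_lt.2 ((mul_nonpos_of_nonneg_of_nonpos hr.le hθ).trans hu)

theorem directionalTail_nonneg (u θ : ℝ) : 0 ≤ directionalTail ν u θ :=
  measureReal_nonneg

theorem measurable_directionalTail [SFinite ν] (u : ℝ) : Measurable (directionalTail ν u) := by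
  have hS : MeasurableSet {q : ℝ × ℝ | u < q.1 * cos q.2} :=
    measurableSet_lt measurable_const (by fun_prop)
  exact (measurable_measure_prodMk_right hS).ennreal_toReal

variable [IsFiniteMeasure ν] {a : ℝ → ℝ} {l : Filter ℝ}

theorem IsGumbelTail.measureReal_Ioi_zero_pos (h : IsGumbelTail (fun u => ν.real (Ioi u)) a l)
    (hν : ∀ᵐ r ∂ν, 0 < r) : 0 < ν.real (Ioi 0) := by
  obtain ⟨c, hc⟩ := h.hasBasis.ex_mem
  calc 0 < ν.real (Ioi c) := hc
    _ ≤ ν.real univ := measureReal_mono (subset_univ _)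
    _ = ν.real (Ioi 0) := (measureReal_congr (eventuallyEq_univ.2 hν)).symm

variable [l.NeBot]

theorem tendsto_directionalTail_div (h : IsGumbelTail (fun u => ν.real (Ioi u)) a l)
    (hν : ∀ᵐ r ∂ν, 0 < r) {ι : Type*} {p : Filter ι} {b θ : ι → ℝ} {s : ℝ} (hb : Tendsto b p l)
    (hθ : Tendsto (fun i => θ i / angularScale a (b i)) p (𝓝 s)) (x : ℝ) :
    Tendsto (fun i => directionalTail ν (b i + x * a (b i)) (θ i) / ν.real (Ioi (b i))) p
      (𝓝 (exp (-(x + s ^ 2 / 2)))) := by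
  have h₀ := h.measureReal_Ioi_zero_pos hν
  have hv := ((h.tendsto_angularScale h₀).mono_right (nhdsGT_le_nhdsNE 0)).comp hb
  have hcos : Tendsto (fun i => cos (θ i)) p (𝓝 1) := by
    simpa [Function.comp_def] using
      (continuous_cos.tendsto 0).comp (tendsto_zero_of_tendsto_div hv hθ)
  have hz := ((tendsto_one_sub_cos_div_sq hv hθ).const_add x).div hcos one_ne_zero
  rw [div_one] at hz
  refine (h.tendsto_ratio_of_tendsto hb hz).congr' ?_
  filter_upwards [hb.eventually (h.eventually_gt h₀), hcos.eventually (lt_mem_nhds one_pos)]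
    with i hi hci
  have ha := h.scale_pos (b i)
  rw [directionalTail_of_cos_pos hci]
  congr 3
  rw [Pi.div_apply, Function.comp_apply, angularScale, sq_sqrt (div_pos ha hi).le]
  field_simp
  ring

theorem exists_directionalTail_le (h : IsGumbelTail (fun u => ν.real (Ioi u)) a l)
    (hν : ∀ᵐ r ∂ν, 0 < r) (x : ℝ) : ∃ C, 0 ≤ C ∧ ∀ᶠ u in l, ∀ θ, |θ| ≤ π →
    directionalTail ν (u + x * a u) θ ≤
      C * (1 + (θ / angularScale a u) ^ 2)⁻¹ * ν.real (Ioi u) := by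
  have h₀ := h.measureReal_Ioi_zero_pos hν
  obtain ⟨C, hC, hCle⟩ := h.exists_eventually_tail_le (abs_nonneg x)
  refine ⟨10 * C, by positivity, ?_⟩
  filter_upwards [hCle, h.eventually_gt h₀, h.eventually_half_lt_add h₀ x]
    with u hu hu₀ hhalf θ hθ
  have ha := h.scale_pos u
  rcases le_or_gt (cos θ) 0 with hcos | hcos
  · rw [directionalTail_of_cos_nonpos hν (by linarith) hcos]
    positivity
  set s := θ / angularScale a u
  have hs : s ^ 2 * a u = u * θ ^ 2 := by
    rw [div_pow, angularScale, sq_sqrt (by positivity)]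
    field_simp
  have hreach : u + (s ^ 2 / 10 - |x|) * a u ≤ (u + x * a u) / cos θ := by
    calc u + (s ^ 2 / 10 - |x|) * a u = u - |x| * a u + u / 2 * (θ ^ 2 / 5) := by linarith
      _ ≤ u + x * a u + (u + x * a u) * (θ ^ 2 / 5) := by
        gcongr
        linarith [mul_le_mul_of_nonneg_right (neg_abs_le x) ha.le]
      _ = (u + x * a u) * (1 + θ ^ 2 / 5) := by ring
      _ ≤ (u + x * a u) / cos θ := by
        rw [div_eq_mul_inv]
        exact mul_le_mul_of_nonneg_left (one_add_sq_div_five_le_inv_cos hθ hcos) (by linarith)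
  have hfactor : C / (1 + s ^ 2 / 10) ≤ 10 * C * (1 + s ^ 2)⁻¹ := by
    rw [← div_eq_mul_inv, div_le_div_iff₀ (by positivity) (by positivity)]
    nlinarith
  calc directionalTail ν (u + x * a u) θ ≤ ν.real (Ioi (u + (s ^ 2 / 10 - |x|) * a u)) := by
        rw [directionalTail_of_cos_pos hcos]
        exact h.antitone hreach
    _ ≤ C / (1 + s ^ 2 / 10) * ν.real (Ioi u) := hu _ (by positivity)
    _ ≤ 10 * C * (1 + s ^ 2)⁻¹ * ν.real (Ioi u) := by gcongr

end DirectionalTail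

/-- The limiting probability, relative to the tail at level `u` of the radius, that the point at
angle `t` (measured in units of the angular scale) exceeds level `u + x * a u` in the direction
at angle `k`. -/
noncomputable def exceedanceProfile (x k t : ℝ) : ℝ :=
  exp (-(x + (t - k) ^ 2 / 2))

/-- The exponent `-log H_λ(x, y)` of the bivariate Hüsler–Reiss distribution `H_λ`. -/
noncomputable def huslerReissExponent (lam x y : ℝ) : ℝ :=
  stdNormalCDF (lam + (x - y) / (2 * lam)) * exp (-y) +
    stdNormalCDF (lam + (y - x) / (2 * lam)) * exp (-x)

section Gaussian

theorem exceedanceProfile_eq_mul (x k t : ℝ) :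
    exceedanceProfile x k t = exp (-x) * exp (-(t - k) ^ 2 / 2) := by
  rw [exceedanceProfile, ← exp_add]
  ring_nf

theorem integrable_exceedanceProfile (x k : ℝ) : Integrable (exceedanceProfile x k) := by
  have hgauss := (integrable_exp_neg_mul_sq (b := 1 / 2) (by norm_num)).comp_sub_right k
  refine (hgauss.const_mul (exp (-x))).congr (.of_forall fun t => ?_)
  simp only [exceedanceProfile_eq_mul]
  ring_nf

theorem integral_exceedanceProfile (x k : ℝ) :
    ∫ t, exceedanceProfile x k t = √(2 * π) * exp (-x) := by
  have hgauss := integral_gaussian (1 / 2)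
  rw [← integral_sub_right_eq_self _ k, div_div_eq_mul_div, div_one, mul_comm π 2] at hgauss
  have hexp : ∀ t, -(1 / 2) * (t - k) ^ 2 = -(t - k) ^ 2 / 2 := fun t => by ring
  simp only [hexp] at hgauss
  simp only [exceedanceProfile_eq_mul]
  rw [integral_const_mul, hgauss, mul_comm]

theorem setIntegral_Iic_exp_neg_sq (c : ℝ) :
    ∫ s in Iic c, exp (-s ^ 2 / 2) = √(2 * π) * stdNormalCDF c := by
  rw [stdNormalCDF, mul_inv_cancel_left₀ (by positivity)]

theorem setIntegral_Iic_exceedanceProfile (x k c : ℝ) :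
    ∫ t in Iic c, exceedanceProfile x k t = √(2 * π) * (stdNormalCDF (c - k) * exp (-x)) := by
  have hshift := (measurePreserving_sub_right volume k).setIntegral_preimage_emb
    (MeasurableEquiv.subRight k).measurableEmbedding (fun s => exp (-s ^ 2 / 2)) (Iic (c - k))
  rw [preimage_sub_const_Iic, sub_add_cancel, setIntegral_Iic_exp_neg_sq] at hshift
  simp only [exceedanceProfile_eq_mul]
  rw [integral_const_mul, hshift]
  ring

theorem setIntegral_Ioi_exceedanceProfile (x k c : ℝ) :
    ∫ t in Ioi c, exceedanceProfile x k t = √(2 * π) * (stdNormalCDF (k - c) * exp (-x)) := by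
  have hreflect : ∀ t, exceedanceProfile x k t = exceedanceProfile x (-k) (-t) := fun t => by
    simp only [exceedanceProfile]
    ring_nf
  simp only [hreflect]
  rw [integral_comp_neg_Ioi, setIntegral_Iic_exceedanceProfile, neg_sub_neg]

theorem exceedanceProfile_le_iff {x y k₁ k₂ t : ℝ} :
    exceedanceProfile x k₁ t ≤ exceedanceProfile y k₂ t ↔
      (k₁ - k₂) * t ≤ x - y + (k₁ ^ 2 - k₂ ^ 2) / 2 := by
  rw [exceedanceProfile, exceedanceProfile, exp_le_exp]
  constructor <;> intro h <;> linarith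

theorem integral_max_exceedanceProfile_of_lt {lam₁ lam₂ : ℝ} (hlt : lam₂ < lam₁) (x y : ℝ) :
    ∫ t, max (exceedanceProfile x (2 * lam₁) t) (exceedanceProfile y (2 * lam₂) t) =
      √(2 * π) * huslerReissExponent (lam₁ - lam₂) x y := by
  have hsub : 0 < lam₁ - lam₂ := sub_pos.2 hlt
  set c := (x - y) / (2 * (lam₁ - lam₂)) + (lam₁ + lam₂) with hc
  have hcross : ∀ t, exceedanceProfile x (2 * lam₁) t ≤ exceedanceProfile y (2 * lam₂) t ↔
      t ≤ c := by
    intro t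
    have hcmul : (2 * lam₁ - 2 * lam₂) * c = x - y + ((2 * lam₁) ^ 2 - (2 * lam₂) ^ 2) / 2 := by
      rw [hc]
      field_simp
      ring
    rw [exceedanceProfile_le_iff, ← hcmul, mul_le_mul_iff_right₀ (by linarith)]
  have hint := (integrable_exceedanceProfile x (2 * lam₁)).sup
    (integrable_exceedanceProfile y (2 * lam₂))
  calc ∫ t, max (exceedanceProfile x (2 * lam₁) t) (exceedanceProfile y (2 * lam₂) t)
      = (∫ t in Iic c, max (exceedanceProfile x (2 * lam₁) t) (exceedanceProfile y (2 * lam₂) t)) +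
        ∫ t in Ioi c, max (exceedanceProfile x (2 * lam₁) t) (exceedanceProfile y (2 * lam₂) t) :=
        (intervalIntegral.integral_Iic_add_Ioi hint.integrableOn hint.integrableOn).symm
    _ = (∫ t in Iic c, exceedanceProfile y (2 * lam₂) t) +
        ∫ t in Ioi c, exceedanceProfile x (2 * lam₁) t := by
        congr 1
        · exact setIntegral_congr_fun measurableSet_Iic fun t ht => max_eq_right ((hcross t).2 ht)
        · exact setIntegral_congr_fun measurableSet_Ioi fun t ht =>
            max_eq_left (le_of_not_ge fun hle => not_lt.2 ((hcross t).1 hle) ht)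
    _ = √(2 * π) * huslerReissExponent (lam₁ - lam₂) x y := by
        rw [setIntegral_Iic_exceedanceProfile, setIntegral_Ioi_exceedanceProfile,
          huslerReissExponent, hc]
        ring_nf

theorem huslerReissExponent_comm (lam x y : ℝ) :
    huslerReissExponent lam x y = huslerReissExponent lam y x :=
  add_comm _ _

theorem integral_max_exceedanceProfile {lam₁ lam₂ : ℝ} (hne : lam₁ ≠ lam₂) (x y : ℝ) :
    ∫ t, max (exceedanceProfile x (2 * lam₁) t) (exceedanceProfile y (2 * lam₂) t) =
      √(2 * π) * huslerReissExponent |lam₁ - lam₂| x y := by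
  rcases hne.lt_or_gt with hlt | hlt
  · simp only [max_comm (exceedanceProfile x _ _)]
    rw [integral_max_exceedanceProfile_of_lt hlt, huslerReissExponent_comm, abs_sub_comm,
      abs_of_pos (sub_pos.2 hlt)]
  · rw [integral_max_exceedanceProfile_of_lt hlt, abs_of_pos (sub_pos.2 hlt)]

theorem huslerReissExponent_add_add (lam x y c : ℝ) :
    huslerReissExponent lam (x + c) (y + c) = exp (-c) * huslerReissExponent lam x y := by
  simp only [huslerReissExponent, add_sub_add_right_eq_sub, neg_add, exp_add]
  ring

end Gaussian

section LaplaceAsymptotics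

theorem inv_one_add_sub_sq_le (k t : ℝ) :
    (1 + (t - k) ^ 2)⁻¹ ≤ 2 * (1 + k ^ 2) * (1 + t ^ 2)⁻¹ := by
  rw [← div_eq_mul_inv, ← one_div, div_le_div_iff₀ (by positivity) (by positivity)]
  nlinarith [sq_nonneg (t - 2 * k), sq_nonneg (k * (t - k))]

variable {ν : Measure ℝ} [IsFiniteMeasure ν] {a : ℝ → ℝ} {l : Filter ℝ} [l.NeBot]
  {ι : Type*} {p : Filter ι} {b : ι → ℝ}

theorem exists_directionalTail_sub_le (h : IsGumbelTail (fun u => ν.real (Ioi u)) a l)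
    (hν : ∀ᵐ r ∂ν, 0 < r) (hb : Tendsto b p l) {α : ι → ℝ} {k : ℝ}
    (hα : Tendsto (fun i => α i / angularScale a (b i)) p (𝓝 k)) (x : ℝ) :
    ∃ C, ∀ᶠ i in p, ∀ t, |angularScale a (b i) * t| ≤ π / 2 →
      directionalTail ν (b i + x * a (b i)) (angularScale a (b i) * t - α i) /
        ν.real (Ioi (b i)) ≤ C * (1 + t ^ 2)⁻¹ := by
  obtain ⟨C, hC, hle⟩ := exists_directionalTail_le h hν x
  have hv := (h.tendsto_angularScale (h.measureReal_Ioi_zero_pos hν)).comp hb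
  have hα₀ := tendsto_zero_of_tendsto_div (hv.mono_right (nhdsGT_le_nhdsNE 0)) hα
  refine ⟨C * (2 * (1 + (|k| + 1) ^ 2)), ?_⟩
  filter_upwards [hb.eventually hle, hb.eventually h.eventually_pos,
    (tendsto_nhdsWithin_iff.1 hv).2, hα.abs.eventually (gt_mem_nhds (lt_add_one |k|)),
    hα₀.abs.eventually (gt_mem_nhds (by simpa using pi_div_two_pos : |(0 : ℝ)| < π / 2))]
    with i hi hT hvi hki hαi t ht
  have hvi' : angularScale a (b i) ≠ 0 := ne_of_gt hvi
  rw [div_le_iff₀ hT]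
  refine (hi _ ((abs_sub _ _).trans (by linarith))).trans
    (mul_le_mul_of_nonneg_right ?_ (le_of_lt hT))
  rw [sub_div, mul_div_cancel_left₀ _ hvi', mul_assoc C]
  refine mul_le_mul_of_nonneg_left ((inv_one_add_sub_sq_le _ t).trans ?_) hC
  gcongr 2 * (1 + ?_) * _
  exact sq_le_sq' (by linarith [neg_abs_le (α i / angularScale a (b i))])
    ((le_abs_self _).trans hki.le)

theorem tendsto_integral_max_directionalTail [p.IsCountablyGenerated]
    (h : IsGumbelTail (fun u => ν.real (Ioi u)) a l) (hν : ∀ᵐ r ∂ν, 0 < r)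
    (hb : Tendsto b p l) {α₁ α₂ : ι → ℝ} {k₁ k₂ : ℝ}
    (hα₁ : Tendsto (fun i => α₁ i / angularScale a (b i)) p (𝓝 k₁))
    (hα₂ : Tendsto (fun i => α₂ i / angularScale a (b i)) p (𝓝 k₂)) (x y : ℝ) :
    Tendsto (fun i => (∫ θ in (-(π / 2))..(π / 2),
        max (directionalTail ν (b i + x * a (b i)) (θ - α₁ i))
          (directionalTail ν (b i + y * a (b i)) (θ - α₂ i))) /
        (angularScale a (b i) * ν.real (Ioi (b i)))) p
      (𝓝 (∫ t, max (exceedanceProfile x k₁ t) (exceedanceProfile y k₂ t))) := by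
  obtain ⟨C₁, hle₁⟩ := exists_directionalTail_sub_le h hν hb hα₁ x
  obtain ⟨C₂, hle₂⟩ := exists_directionalTail_sub_le h hν hb hα₂ y
  have hv := (h.tendsto_angularScale (h.measureReal_Ioi_zero_pos hν)).comp hb
  let f : ι → ℝ → ℝ := fun i θ =>
    max (directionalTail ν (b i + x * a (b i)) (θ - α₁ i) / ν.real (Ioi (b i)))
      (directionalTail ν (b i + y * a (b i)) (θ - α₂ i) / ν.real (Ioi (b i)))
  have hf : ∀ i, StronglyMeasurable (f i) := fun i =>
    ((((measurable_directionalTail _).comp (measurable_sub_const _)).div_const _).max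
      (((measurable_directionalTail _).comp (measurable_sub_const _)).div_const
        _)).stronglyMeasurable
  have hquot : ∀ i u θ, 0 ≤ directionalTail ν u θ / ν.real (Ioi (b i)) :=
    fun i u θ => div_nonneg (directionalTail_nonneg u θ) measureReal_nonneg
  have hangle : ∀ {α : ι → ℝ} {k : ℝ} (t : ℝ),
      Tendsto (fun i => α i / angularScale a (b i)) p (𝓝 k) →
      Tendsto (fun i => (angularScale a (b i) * t - α i) / angularScale a (b i)) p
        (𝓝 (t - k)) := by
    intro α k t hα
    refine (hα.const_sub t).congr' ?_
    filter_upwards [(tendsto_nhdsWithin_iff.1 hv).2] with i hvi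
    rw [sub_div, mul_div_cancel_left₀ _ (ne_of_gt hvi)]
  have hmain := tendsto_inv_smul_intervalIntegral (f := f)
    (g := fun t => max (exceedanceProfile x k₁ t) (exceedanceProfile y k₂ t))
    pi_div_two_pos hv hf (integrable_inv_one_add_sq.const_mul (C₁ + C₂)) ?_ fun t =>
    (tendsto_directionalTail_div h hν hb (hangle t hα₁) x).max
      (tendsto_directionalTail_div h hν hb (hangle t hα₂) y)
  · refine hmain.congr fun i => ?_
    simp only [f, max_div_div_right measureReal_nonneg, intervalIntegral.integral_div, smul_eq_mul]
    rw [inv_mul_eq_div, div_div, mul_comm (ν.real _), Function.comp_apply]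
  · filter_upwards [hle₁, hle₂] with i hi₁ hi₂ t ht
    rw [norm_of_nonneg (le_max_of_le_left (hquot i _ _)), add_mul]
    exact (max_le_add_of_nonneg (hquot i _ _) (hquot i _ _)).trans
      (add_le_add (hi₁ t ht) (hi₂ t ht))

end LaplaceAsymptotics

/-- `(R cos Θ, R sin Θ)` is an isotropic random point of the plane without mass at the origin,
written in polar coordinates: the angle is uniform and independent of the radius. -/
structure IsPolarRepresentation {Ω : Type*} [MeasurableSpace Ω] (μ : Measure Ω) (R Θ : Ω → ℝ) :
    Prop where
  measurable_radius : Measurable R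
  measurable_angle : Measurable Θ
  radius_pos : ∀ᵐ ω ∂μ, 0 < R ω
  map_angle : μ.map Θ = (ENNReal.ofReal (2 * π))⁻¹ • volume.restrict (Ioo (-π) π)
  indepFun : IndepFun R Θ μ

theorem countable_setOf_cos_eq (c : ℝ) : {θ | cos θ = c}.Countable := by
  rcases eq_empty_or_nonempty {θ | cos θ = c} with hempty | ⟨θ₀, hθ₀⟩
  · simp [hempty]
  · refine (countable_iUnion fun k : ℤ =>
      ((finite_singleton (2 * k * π - θ₀)).insert (2 * k * π + θ₀)).countable).mono fun θ hθ => ?_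
    obtain ⟨k, hk⟩ := cos_eq_cos_iff.1 (Eq.trans hθ₀ (Eq.symm hθ))
    exact mem_iUnion.2 ⟨k, hk⟩

theorem intervalIntegral_neg_pi_pi_eq {E : Type*} [NormedAddCommGroup E] [NormedSpace ℝ E]
    {f : ℝ → E} (hper : Function.Periodic f (2 * π))
    (hint : ∀ x y, IntervalIntegrable f volume x y) :
    ∫ θ in (-π)..π, f θ = ∫ θ in (-(π / 2))..(π / 2), (f θ + f (π - θ)) := by
  have hreflect := intervalIntegral.integral_comp_sub_left f π (a := -(π / 2)) (b := π / 2)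
  have hint' := (hint (π - -(π / 2)) (π - π / 2)).comp_sub_left π
  simp only [sub_sub_cancel] at hint'
  calc ∫ θ in (-π)..π, f θ = ∫ θ in (-(π / 2))..(π - -(π / 2)), f θ := by
        have hshift := hper.intervalIntegral_add_eq (-π) (-(π / 2))
        ring_nf at hshift ⊢
        exact hshift
    _ = (∫ θ in (-(π / 2))..(π / 2), f θ) + ∫ θ in (π - π / 2)..(π - -(π / 2)), f θ := by
        rw [sub_half, intervalIntegral.integral_add_adjacent_intervals (hint _ _) (hint _ _)]
    _ = ∫ θ in (-(π / 2))..(π / 2), (f θ + f (π - θ)) := by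
        rw [← hreflect, intervalIntegral.integral_add (hint _ _) hint']

theorem measureReal_union_of_isUpperSet {α : Type*} [LinearOrder α] [MeasurableSpace α]
    {ν : Measure α} [IsFiniteMeasure ν] {s t : Set α} (hs : IsUpperSet s) (ht : IsUpperSet t) :
    ν.real (s ∪ t) = max (ν.real s) (ν.real t) := by
  rcases hs.total ht with hst | hts
  · rw [union_eq_self_of_subset_left hst, max_eq_right (measureReal_mono hst)]
  · rw [union_eq_self_of_subset_right hts, max_eq_left (measureReal_mono hts)]

theorem measureReal_lt_mul_cos_or {ν : Measure ℝ} [IsFiniteMeasure ν] (hν : ∀ᵐ r ∂ν, 0 < r)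
    {u₁ u₂ : ℝ} (hu₁ : 0 ≤ u₁) (hu₂ : 0 ≤ u₂) (θ₁ θ₂ : ℝ) :
    ν.real {r | u₁ < r * cos θ₁ ∨ u₂ < r * cos θ₂} =
      max (directionalTail ν u₁ θ₁) (directionalTail ν u₂ θ₂) := by
  have hupper : ∀ u θ, 0 ≤ u → IsUpperSet {r | 0 < r ∧ u < r * cos θ} := by
    rintro u θ hu r s hrs ⟨hr, hur⟩
    have hcos : 0 < cos θ := pos_of_mul_pos_right (hu.trans_lt hur) hr.le
    exact ⟨hr.trans_le hrs, hur.trans_le (by gcongr)⟩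
  have hpos : ∀ P : ℝ → Prop, ν.real {r | P r} = ν.real {r | 0 < r ∧ P r} := by
    refine fun P => measureReal_congr (eventuallyEq_set.2 ?_)
    filter_upwards [hν] with r hr using (and_iff_right hr).symm
  rw [directionalTail, directionalTail, hpos, hpos (u₁ < · * cos θ₁), hpos (u₂ < · * cos θ₂),
    ← measureReal_union_of_isUpperSet (hupper u₁ θ₁ hu₁) (hupper u₂ θ₂ hu₂)]
  simp only [and_or_left, Set.ofPred_or]

namespace IsPolarRepresentation

variable {Ω : Type*} [MeasurableSpace Ω] {μ : Measure Ω} {R Θ : Ω → ℝ}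

theorem ae_map_radius_pos (h : IsPolarRepresentation μ R Θ) : ∀ᵐ r ∂μ.map R, 0 < r :=
  (ae_map_iff h.measurable_radius.aemeasurable measurableSet_Ioi).2 h.radius_pos

variable [IsProbabilityMeasure μ]

theorem measure_prodMk_mem (h : IsPolarRepresentation μ R Θ) {S : Set (ℝ × ℝ)}
    (hS : MeasurableSet S) : μ {ω | (R ω, Θ ω) ∈ S} = (μ.map R).prod (μ.map Θ) S := by
  rw [← (indepFun_iff_map_prod_eq_prod_map_map h.measurable_radius.aemeasurable
    h.measurable_angle.aemeasurable).1 h.indepFun,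
    Measure.map_apply (h.measurable_radius.prodMk h.measurable_angle) hS]
  rfl

theorem nullSingletonClass_map (h : IsPolarRepresentation μ R Θ) :
    NullSingletonClass (μ.map fun ω => R ω * cos (Θ ω)) := by
  have hR := h.measurable_radius
  have hΘ := h.measurable_angle
  refine ⟨fun c => ?_⟩
  have hS : MeasurableSet {q : ℝ × ℝ | q.1 * cos q.2 = c} :=
    measurableSet_eq_fun (by fun_prop) measurable_const
  rw [Measure.map_apply (by fun_prop) (measurableSet_singleton c)]
  change μ {ω | (R ω, Θ ω) ∈ {q : ℝ × ℝ | q.1 * cos q.2 = c}} = 0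
  rw [h.measure_prodMk_mem hS, Measure.measure_prod_null hS]
  filter_upwards [h.ae_map_radius_pos] with r hr
  refine measure_mono_null (t := {θ | cos θ = c / r})
    (fun θ (hθ : r * cos θ = c) => by rw [mem_ofPred_eq, eq_div_iff hr.ne', mul_comm, hθ]) ?_
  rw [h.map_angle, Measure.smul_apply, (countable_setOf_cos_eq _).measure_zero, smul_zero]

theorem measureReal_prodMk_mem (h : IsPolarRepresentation μ R Θ) {S : Set (ℝ × ℝ)}
    (hS : MeasurableSet S) : μ.real {ω | (R ω, Θ ω) ∈ S} =
      (2 * π)⁻¹ * ∫ θ in (-π)..π, (μ.map R).real {r | (r, θ) ∈ S} := by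
  rw [measureReal_def, h.measure_prodMk_mem hS, Measure.prod_apply_symm hS, h.map_angle,
    lintegral_smul_measure, smul_eq_mul, ENNReal.toReal_mul, ENNReal.toReal_inv,
    ENNReal.toReal_ofReal two_pi_pos.le,
    intervalIntegral.integral_of_le (by linarith [pi_pos]), integral_Ioc_eq_integral_Ioo,
    ← integral_toReal (measurable_measure_prodMk_right hS).aemeasurable
      (.of_forall fun _ => measure_lt_top _ _)]
  rfl

theorem measureReal_cos_sin_mem (h : IsPolarRepresentation μ R Θ) {D : Set (ℝ × ℝ)}
    (hD : MeasurableSet D) : μ.real {ω | (R ω * cos (Θ ω), R ω * sin (Θ ω)) ∈ D} =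
      (2 * π)⁻¹ * ∫ θ in (-(π / 2))..(π / 2),
        ((μ.map R).real {r | (r * cos θ, r * sin θ) ∈ D} +
          (μ.map R).real {r | (-(r * cos θ), r * sin θ) ∈ D}) := by
  have hS : MeasurableSet {q : ℝ × ℝ | (q.1 * cos q.2, q.1 * sin q.2) ∈ D} :=
    (by fun_prop : Measurable fun q : ℝ × ℝ => (q.1 * cos q.2, q.1 * sin q.2)) hD
  let f : ℝ → ℝ := fun θ => (μ.map R).real {r | (r * cos θ, r * sin θ) ∈ D}
  have hper : Function.Periodic f (2 * π) := fun θ => by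
    simp only [f, cos_add_two_pi, sin_add_two_pi]
  have hmeas : Measurable f := (measurable_measure_prodMk_right hS).ennreal_toReal
  have hint : ∀ x y, IntervalIntegrable f volume x y := fun x y =>
    (intervalIntegrable_const (c := (μ.map R).real univ)).mono_fun hmeas.aestronglyMeasurable
      (.of_forall fun θ => by
        simpa only [f, norm_of_nonneg measureReal_nonneg] using measureReal_mono (subset_univ _))
  refine (h.measureReal_prodMk_mem hS).trans ?_
  change (2 * π)⁻¹ * ∫ θ in (-π)..π, f θ = _
  rw [intervalIntegral_neg_pi_pi_eq hper hint]
  simp only [f, cos_pi_sub, sin_pi_sub, mul_neg]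

theorem measureReal_lt_mul_cos (h : IsPolarRepresentation μ R Θ) {u : ℝ} (hu : 0 ≤ u) :
    μ.real {ω | u < R ω * cos (Θ ω)} =
      (2 * π)⁻¹ * ∫ θ in (-(π / 2))..(π / 2), directionalTail (μ.map R) u θ := by
  refine (h.measureReal_cos_sin_mem (measurableSet_lt measurable_const measurable_fst)).trans ?_
  congr 1
  refine intervalIntegral.integral_congr fun θ hθ => ?_
  rw [uIcc_of_le (by linarith [pi_pos])] at hθ
  have hback : directionalTail (μ.map R) u (π - θ) = 0 :=
    directionalTail_of_cos_nonpos h.ae_map_radius_pos hu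
      (by linarith [cos_pi_sub θ, cos_nonneg_of_mem_Icc hθ])
  simpa [directionalTail, cos_pi_sub] using hback

theorem measureReal_exceedance (h : IsPolarRepresentation μ R Θ) {u₁ u₂ : ℝ} (hu₁ : 0 ≤ u₁)
    (hu₂ : 0 ≤ u₂) (α₁ α₂ : ℝ) :
    μ.real {ω | u₁ < cos α₁ * |R ω * cos (Θ ω)| + sin α₁ * (R ω * sin (Θ ω)) ∨
        u₂ < cos α₂ * |R ω * cos (Θ ω)| + sin α₂ * (R ω * sin (Θ ω))} =
      π⁻¹ * ∫ θ in (-(π / 2))..(π / 2),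
        max (directionalTail (μ.map R) u₁ (θ - α₁)) (directionalTail (μ.map R) u₂ (θ - α₂)) := by
  have hD : ∀ u α, MeasurableSet {q : ℝ × ℝ | u < cos α * |q.1| + sin α * q.2} :=
    fun u α => measurableSet_lt measurable_const (by fun_prop)
  refine (h.measureReal_cos_sin_mem ((hD u₁ α₁).union (hD u₂ α₂))).trans ?_
  rw [mul_inv, mul_comm (2⁻¹ : ℝ), mul_assoc, ← intervalIntegral.integral_const_mul]
  congr 1
  refine intervalIntegral.integral_congr fun θ hθ => ?_
  rw [uIcc_of_le (by linarith [pi_pos])] at hθ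
  have hν := h.ae_map_radius_pos
  have hfront : (μ.map R).real {r | u₁ < cos α₁ * |r * cos θ| + sin α₁ * (r * sin θ) ∨
      u₂ < cos α₂ * |r * cos θ| + sin α₂ * (r * sin θ)} =
      max (directionalTail (μ.map R) u₁ (θ - α₁)) (directionalTail (μ.map R) u₂ (θ - α₂)) := by
    rw [← measureReal_lt_mul_cos_or hν hu₁ hu₂]
    refine measureReal_congr (eventuallyEq_set.2 ?_)
    filter_upwards [hν] with r hr
    have hrotate : ∀ α, cos α * |r * cos θ| + sin α * (r * sin θ) = r * cos (θ - α) := fun α => by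
      rw [abs_of_nonneg (mul_nonneg hr.le (cos_nonneg_of_mem_Icc hθ)), cos_sub]
      ring
    simp only [hrotate]
  simp only [mem_union, mem_ofPred_eq, abs_neg, hfront]
  ring

end IsPolarRepresentation

/-- The linear combination `ρ |X| + √(1 - ρ²) Y` of the triangular array. For `ρ = cos α` with
`α ∈ [0, π]` and `X ≥ 0`, it is the component of `(X, Y)` in the direction at angle `α`. -/
noncomputable def skewProjection (ρ x y : ℝ) : ℝ :=
  ρ * |x| + √(1 - ρ ^ 2) * y

theorem tendsto_pow_measureReal_compl {Ω : Type*} [MeasurableSpace Ω] {μ : Measure Ω}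
    [IsProbabilityMeasure μ] {E : ℕ → Set Ω} {c : ℝ} (hE : ∀ n, MeasurableSet (E n))
    (hlim : Tendsto (fun n => n * μ.real (E n)) atTop (𝓝 c)) :
    Tendsto (fun n => μ.real (E n)ᶜ ^ n) atTop (𝓝 (exp (-c))) := by
  simp only [probReal_compl_eq_one_sub (hE _), sub_eq_add_neg]
  exact tendsto_one_add_pow_exp_of_tendsto (by simpa only [mul_neg] using hlim.neg)

section Asymptotics

variable {Ω : Type*} [MeasurableSpace Ω] {μ : Measure Ω} [IsProbabilityMeasure μ] {R Θ : Ω → ℝ}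
  {a : ℝ → ℝ} {l : Filter ℝ} [l.NeBot] {ι : Type*} {p : Filter ι} {b : ι → ℝ}

theorem IsGumbelTail.tendsto_arccos_div_angularScale {T : ℝ → ℝ} (hg : IsGumbelTail T a l)
    (h₀ : 0 < T 0) (hb : Tendsto b p l) {ρ : ι → ℝ} {lam : ℝ} (hρ : ∀ i, ρ i ≤ 1)
    (hlam : 0 ≤ lam)
    (hlim : Tendsto (fun i => (1 - ρ i) * b i / a (b i)) p (𝓝 (2 * lam ^ 2))) :
    Tendsto (fun i => arccos (ρ i) / angularScale a (b i)) p (𝓝 (2 * lam)) := by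
  refine tendsto_arccos_div hlam ((hg.tendsto_angularScale h₀).comp hb) hρ (hlim.congr' ?_)
  filter_upwards [hb.eventually (hg.eventually_gt h₀)] with i hi
  rw [angularScale, sq_sqrt (div_pos (hg.scale_pos _) hi).le, div_div_eq_mul_div]

theorem IsGumbelTail.eventually_neg_one_le {T : ℝ → ℝ} (hg : IsGumbelTail T a l)
    (h₀ : 0 < T 0) (hb : Tendsto b p l) {ρ : ι → ℝ} {c : ℝ}
    (hlim : Tendsto (fun i => (1 - ρ i) * b i / a (b i)) p (𝓝 c)) :
    ∀ᶠ i in p, -1 ≤ ρ i := by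
  have hzero := hlim.mul ((hg.tendsto_scale_div_self h₀).comp hb)
  rw [mul_zero] at hzero
  filter_upwards [hzero.eventually (gt_mem_nhds one_pos), hb.eventually (hg.eventually_gt h₀)]
    with i hi hbi
  have ha := hg.scale_pos (b i)
  rw [Function.comp_apply, div_mul_div_cancel₀ ha.ne', mul_div_cancel_right₀ _ (ne_of_gt hbi)] at hi
  linarith

namespace IsPolarRepresentation

theorem tendsto_measureReal_lt_mul_cos_div [l.IsCountablyGenerated]
    (h : IsPolarRepresentation μ R Θ)
    (hg : IsGumbelTail (fun u => (μ.map R).real (Ioi u)) a l) :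
    Tendsto (fun u => μ.real {ω | u < R ω * cos (Θ ω)} /
      (angularScale a u * (μ.map R).real (Ioi u))) l (𝓝 (√(2 * π))⁻¹) := by
  have hα : Tendsto (fun u => (0 : ℝ) / angularScale a u) l (𝓝 0) := by simp
  have hint := (tendsto_integral_max_directionalTail hg h.ae_map_radius_pos tendsto_id
    hα hα 0 0).const_mul (2 * π)⁻¹
  simp only [max_self, integral_exceedanceProfile, zero_mul, add_zero, sub_zero, id, neg_zero,
    exp_zero, mul_one, inv_mul_eq_div, sqrt_div_self] at hint
  refine hint.congr' ?_
  filter_upwards [hg.eventually_gt (hg.measureReal_Ioi_zero_pos h.ae_map_radius_pos)] with u hu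
  rw [h.measureReal_lt_mul_cos (le_of_lt hu), inv_mul_eq_div, div_right_comm]

theorem eventually_measureReal_lt_mul_cos_pos [l.IsCountablyGenerated]
    (h : IsPolarRepresentation μ R Θ)
    (hg : IsGumbelTail (fun u => (μ.map R).real (Ioi u)) a l) :
    ∀ᶠ u in l, 0 < μ.real {ω | u < R ω * cos (Θ ω)} := by
  filter_upwards [(h.tendsto_measureReal_lt_mul_cos_div hg).eventually
    (lt_mem_nhds (by positivity : 0 < (√(2 * π))⁻¹))] with u hu
  exact measureReal_nonneg.lt_of_ne fun hzero => hu.ne' (by rw [← hzero, zero_div])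

theorem measureReal_lt_mul_cos_le (h : IsPolarRepresentation μ R Θ) (u : ℝ) :
    μ.real {ω | u < R ω * cos (Θ ω)} ≤ (μ.map R).real (Ioi u) := by
  rw [map_measureReal_apply h.measurable_radius measurableSet_Ioi]
  refine ENNReal.toReal_mono (measure_ne_top _ _) (measure_mono_ae ?_)
  filter_upwards [h.radius_pos] with ω hω hu
  exact lt_of_lt_of_le hu (mul_le_of_le_one_right hω.le (cos_le_one _))

theorem tendsto_of_tendsto_measureReal_lt_mul_cos [l.IsCountablyGenerated]
    (h : IsPolarRepresentation μ R Θ)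
    (hg : IsGumbelTail (fun u => (μ.map R).real (Ioi u)) a l)
    (hb : Tendsto (fun i => μ.real {ω | b i < R ω * cos (Θ ω)}) p (𝓝[>] 0)) :
    Tendsto b p l := by
  obtain ⟨hzero, hpos⟩ := tendsto_nhdsWithin_iff.1 hb
  refine hg.hasBasis.tendsto_right_iff.2 fun c hc => ?_
  obtain ⟨u, hcu, hu⟩ :=
    ((hg.eventually_gt hc).and (h.eventually_measureReal_lt_mul_cos_pos hg)).exists
  filter_upwards [hzero.eventually (gt_mem_nhds hu), hpos] with i hi hposi
  refine ⟨hcu.trans_le (le_of_not_gt fun hbu => hi.not_ge ?_),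
    lt_of_lt_of_le hposi (h.measureReal_lt_mul_cos_le _)⟩
  exact measureReal_mono fun ω (hω : u < _) => hbu.trans hω

theorem measureReal_sInf_lt_mul_cos (h : IsPolarRepresentation μ R Θ) {q : ℝ} (hq₀ : 0 < q)
    (hq₁ : q < 1) :
    μ.real {ω | sInf {x | q < μ.real {ω | R ω * cos (Θ ω) ≤ x}} < R ω * cos (Θ ω)} = 1 - q := by
  have hR := h.measurable_radius
  have hΘ := h.measurable_angle
  have hX : Measurable fun ω => R ω * cos (Θ ω) := by fun_prop
  have := h.nullSingletonClass_map
  have := Measure.isProbabilityMeasure_map (μ := μ) hX.aemeasurable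
  have hcdf : ∀ x, μ.real {ω | R ω * cos (Θ ω) ≤ x} =
      (μ.map fun ω => R ω * cos (Θ ω)).real (Iic x) := fun x =>
    (map_measureReal_apply hX measurableSet_Iic).symm
  simp only [hcdf]
  have hquantile := measureReal_Iic_sInf_eq (μ.map fun ω => R ω * cos (Θ ω)) hq₀ hq₁
  rw [← hcdf] at hquantile
  conv_rhs => rw [← hquantile, ← probReal_compl_eq_one_sub (measurableSet_le hX measurable_const)]
  simp only [compl_ofPred, not_le]

theorem eventually_measureReal_lt_mul_cos_eq (h : IsPolarRepresentation μ R Θ) {b : ℕ → ℝ}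
    (hb : ∀ n : ℕ, b n = sInf {x | 1 - 1 / (n : ℝ) < μ.real {ω | R ω * cos (Θ ω) ≤ x}}) :
    ∀ᶠ n : ℕ in atTop, μ.real {ω | b n < R ω * cos (Θ ω)} = 1 / n := by
  filter_upwards [eventually_gt_atTop 1] with n hn
  have hn' : (1 : ℝ) < n := by exact_mod_cast hn
  rw [hb, h.measureReal_sInf_lt_mul_cos (sub_pos.2 ((div_lt_one (by positivity)).2 hn'))
    (sub_lt_self _ (by positivity)), sub_sub_cancel]

theorem tendsto_exceedance_div [p.IsCountablyGenerated] (h : IsPolarRepresentation μ R Θ)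
    (hg : IsGumbelTail (fun u => (μ.map R).real (Ioi u)) a l) (hb : Tendsto b p l)
    {ρ₁ ρ₂ : ι → ℝ} {lam₁ lam₂ : ℝ} (hρ₁ : ∀ i, ρ₁ i ≤ 1) (hρ₂ : ∀ i, ρ₂ i ≤ 1)
    (hlam₁ : 0 ≤ lam₁) (hlam₂ : 0 ≤ lam₂) (hne : lam₁ ≠ lam₂)
    (hlim₁ : Tendsto (fun i => (1 - ρ₁ i) * b i / a (b i)) p (𝓝 (2 * lam₁ ^ 2)))
    (hlim₂ : Tendsto (fun i => (1 - ρ₂ i) * b i / a (b i)) p (𝓝 (2 * lam₂ ^ 2))) (x y : ℝ) :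
    Tendsto (fun i => μ.real {ω |
        b i + x * a (b i) < skewProjection (ρ₁ i) (R ω * cos (Θ ω)) (R ω * sin (Θ ω)) ∨
        b i + y * a (b i) < skewProjection (ρ₂ i) (R ω * cos (Θ ω)) (R ω * sin (Θ ω))} /
      (angularScale a (b i) * (μ.map R).real (Ioi (b i)))) p
      (𝓝 (π⁻¹ * (√(2 * π) * huslerReissExponent |lam₁ - lam₂| x y))) := by
  have hν := h.ae_map_radius_pos
  have h₀ := hg.measureReal_Ioi_zero_pos hν
  have hint := (tendsto_integral_max_directionalTail hg hν hb
    (hg.tendsto_arccos_div_angularScale h₀ hb hρ₁ hlam₁ hlim₁)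
    (hg.tendsto_arccos_div_angularScale h₀ hb hρ₂ hlam₂ hlim₂) x y).const_mul π⁻¹
  rw [integral_max_exceedanceProfile hne] at hint
  refine hint.congr' ?_
  have hthreshold : ∀ z, ∀ᶠ i in p, 0 ≤ b i + z * a (b i) := fun z => by
    filter_upwards [hb.eventually (hg.eventually_gt h₀),
      hb.eventually (hg.eventually_half_lt_add h₀ z)] with i hbi hi
    exact ((half_pos hbi).trans hi).le
  filter_upwards [hthreshold x, hthreshold y, hg.eventually_neg_one_le h₀ hb hlim₁,
    hg.eventually_neg_one_le h₀ hb hlim₂] with i hx hy hρ₁' hρ₂'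
  have hexceed := h.measureReal_exceedance hx hy (arccos (ρ₁ i)) (arccos (ρ₂ i))
  rw [cos_arccos hρ₁' (hρ₁ i), cos_arccos hρ₂' (hρ₂ i), sin_arccos, sin_arccos] at hexceed
  simp only [skewProjection, hexceed, mul_div_assoc]

theorem tendsto_exceedance_div_measureReal_lt_mul_cos [l.IsCountablyGenerated]
    [p.IsCountablyGenerated] (h : IsPolarRepresentation μ R Θ)
    (hg : IsGumbelTail (fun u => (μ.map R).real (Ioi u)) a l) (hb : Tendsto b p l)
    {ρ₁ ρ₂ : ι → ℝ} {lam₁ lam₂ : ℝ} (hρ₁ : ∀ i, ρ₁ i ≤ 1) (hρ₂ : ∀ i, ρ₂ i ≤ 1)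
    (hlam₁ : 0 ≤ lam₁) (hlam₂ : 0 ≤ lam₂) (hne : lam₁ ≠ lam₂)
    (hlim₁ : Tendsto (fun i => (1 - ρ₁ i) * b i / a (b i)) p (𝓝 (2 * lam₁ ^ 2)))
    (hlim₂ : Tendsto (fun i => (1 - ρ₂ i) * b i / a (b i)) p (𝓝 (2 * lam₂ ^ 2))) (x y : ℝ) :
    Tendsto (fun i => μ.real {ω |
        b i + x * a (b i) < skewProjection (ρ₁ i) (R ω * cos (Θ ω)) (R ω * sin (Θ ω)) ∨
        b i + y * a (b i) < skewProjection (ρ₂ i) (R ω * cos (Θ ω)) (R ω * sin (Θ ω))} /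
      μ.real {ω | b i < R ω * cos (Θ ω)}) p
      (𝓝 (2 * huslerReissExponent |lam₁ - lam₂| x y)) := by
  have hratio := (h.tendsto_exceedance_div hg hb hρ₁ hρ₂ hlam₁ hlam₂ hne hlim₁ hlim₂ x y).div
    ((h.tendsto_measureReal_lt_mul_cos_div hg).comp hb) (inv_ne_zero (by positivity))
  have hval : π⁻¹ * (√(2 * π) * huslerReissExponent |lam₁ - lam₂| x y) / (√(2 * π))⁻¹ =
      2 * huslerReissExponent |lam₁ - lam₂| x y := by
    rw [div_inv_eq_mul]
    linear_combination (huslerReissExponent |lam₁ - lam₂| x y) * (π⁻¹ *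
      mul_self_sqrt two_pi_pos.le + 2 * inv_mul_cancel₀ pi_ne_zero)
  rw [hval] at hratio
  refine hratio.congr' ?_
  have hv := (hg.tendsto_angularScale (hg.measureReal_Ioi_zero_pos h.ae_map_radius_pos)).comp hb
  filter_upwards [hb.eventually hg.eventually_pos, (tendsto_nhdsWithin_iff.1 hv).2]
    with i hT (hvi : 0 < angularScale a (b i))
  simp only [Pi.div_apply, Function.comp_apply]
  exact div_div_div_cancel_right₀ (mul_pos hvi hT).ne' _ _

theorem tendsto_pow_skewProjection_le [l.IsCountablyGenerated] (h : IsPolarRepresentation μ R Θ)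
    (hg : IsGumbelTail (fun u => (μ.map R).real (Ioi u)) a l) {b ρ₁ ρ₂ : ℕ → ℝ}
    (hb : ∀ᶠ n : ℕ in atTop, μ.real {ω | b n < R ω * cos (Θ ω)} = 1 / n) {lam₁ lam₂ : ℝ}
    (hρ₁ : ∀ n, ρ₁ n ≤ 1) (hρ₂ : ∀ n, ρ₂ n ≤ 1)
    (hlam₁ : 0 ≤ lam₁) (hlam₂ : 0 ≤ lam₂) (hne : lam₁ ≠ lam₂)
    (hlim₁ : Tendsto (fun n => (1 - ρ₁ n) * b n / a (b n)) atTop (𝓝 (2 * lam₁ ^ 2)))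
    (hlim₂ : Tendsto (fun n => (1 - ρ₂ n) * b n / a (b n)) atTop (𝓝 (2 * lam₂ ^ 2))) (x y : ℝ) :
    Tendsto (fun n => μ.real {ω |
        skewProjection (ρ₁ n) (R ω * cos (Θ ω)) (R ω * sin (Θ ω)) ≤ b n + x * a (b n) ∧
        skewProjection (ρ₂ n) (R ω * cos (Θ ω)) (R ω * sin (Θ ω)) ≤ b n + y * a (b n)} ^ n) atTop
      (𝓝 (exp (-(2 * huslerReissExponent |lam₁ - lam₂| x y)))) := by
  have hR := h.measurable_radius
  have hΘ := h.measurable_angle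
  have hbl : Tendsto b atTop l := by
    refine h.tendsto_of_tendsto_measureReal_lt_mul_cos hg (tendsto_nhdsWithin_iff.2
      ⟨tendsto_one_div_atTop_nhds_zero_nat.congr' (hb.mono fun n hn => hn.symm), ?_⟩)
    filter_upwards [hb, eventually_gt_atTop 0] with n hn hpos
    rw [hn, mem_Ioi]
    positivity
  have hmeas : ∀ ρ u, MeasurableSet
      {ω | u < skewProjection ρ (R ω * cos (Θ ω)) (R ω * sin (Θ ω))} := fun ρ u =>
    measurableSet_lt measurable_const (by unfold skewProjection; fun_prop)
  have hexceed := h.tendsto_exceedance_div_measureReal_lt_mul_cos hg hbl hρ₁ hρ₂ hlam₁ hlam₂ hne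
    hlim₁ hlim₂ x y
  refine (tendsto_pow_measureReal_compl (μ := μ)
    (fun n => (hmeas (ρ₁ n) (b n + x * a (b n))).union (hmeas (ρ₂ n) (b n + y * a (b n))))
    (hexceed.congr' ?_)).congr fun n => ?_
  · filter_upwards [hb] with n hn
    rw [hn, div_div_eq_mul_div, div_one, mul_comm, ofPred_or]
  · simp only [compl_union, compl_ofPred, not_lt, ofPred_and]

end IsPolarRepresentation

end Asymptotics

theorem isGumbelTail_of_upperEndpoint {ν : Measure ℝ} [IsProbabilityMeasure ν] {w : ℝ → ℝ}
    {l : Filter ℝ} (hw : ∀ u, 0 < w u)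
    (hendpoint : (l = atTop ∧ ∀ x, ν.real (Iic x) < 1) ∨
      ∃ xF, l = 𝓝[<] xF ∧ (∀ x < xF, ν.real (Iic x) < 1) ∧ ∀ x, xF ≤ x → ν.real (Iic x) = 1)
    (hratio : ∀ s, Tendsto (fun u => (1 - ν.real (Iic (u + s / w u))) / (1 - ν.real (Iic u))) l
      (𝓝 (exp (-s)))) :
    IsGumbelTail (fun u => ν.real (Ioi u)) (fun u => 1 / w u) l := by
  have htail : ∀ u, ν.real (Ioi u) = 1 - ν.real (Iic u) := fun u => by
    rw [← compl_Iic, probReal_compl_eq_one_sub measurableSet_Iic]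
  refine ⟨fun u v huv => measureReal_mono (Ioi_subset_Ioi huv), fun u => measureReal_nonneg,
    fun u => one_div_pos.2 (hw u), ?_, fun s => ?_⟩
  · simpa only [htail] using hasBasis_of_upperEndpoint hendpoint
  · simpa only [htail, mul_one_div] using hratio s

theorem maxima_skew_gumbel_HuslerReiss_general {Ω : Type*} [MeasurableSpace Ω] (μ : Measure Ω)
    [IsProbabilityMeasure μ] (R Θ : Ω → ℝ) (hRm : Measurable R) (hΘm : Measurable Θ)
    (hRpos : ∀ᵐ ω ∂μ, 0 < R ω)
    (hΘunif : μ.map Θ = (ENNReal.ofReal (2 * π))⁻¹ • volume.restrict (Ioo (-π) π))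
    (hindep : IndepFun R Θ μ)
    (X Y : Ω → ℝ) (hX : X = fun ω => R ω * cos (Θ ω)) (hY : Y = fun ω => R ω * sin (Θ ω))
    (F G : ℝ → ℝ) (hF : F = fun x => μ.real {ω | R ω ≤ x})
    (hG : G = fun x => μ.real {ω | X ω ≤ x})
    (w : ℝ → ℝ) (hw : ∀ x, 0 < w x) (l : Filter ℝ)
    (hendpoint : (l = atTop ∧ ∀ x, F x < 1) ∨
      ∃ xF, l = 𝓝[<] xF ∧ (∀ x < xF, F x < 1) ∧ ∀ x, xF ≤ x → F x = 1)
    (hGumbel : ∀ s, Tendsto (fun u => (1 - F (u + s / w u)) / (1 - F u)) l (𝓝 (exp (-s))))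
    (b a : ℕ → ℝ) (hb : ∀ n : ℕ, b n = sInf {x | 1 - 1 / (n : ℝ) < G x})
    (ha : ∀ n, a n = 1 / w (b n))
    (ρ₁ ρ₂ : ℕ → ℝ) (hρ₁ : ∀ n, ρ₁ n ≤ 1) (hρ₂ : ∀ n, ρ₂ n ≤ 1)
    (lam₁ lam₂ : ℝ) (hlam₁ : 0 ≤ lam₁) (hlam₂ : 0 ≤ lam₂)
    (hHR₁ : Tendsto (fun n => (1 - ρ₁ n) * b n / a n) atTop (𝓝 (2 * lam₁ ^ 2)))
    (hHR₂ : Tendsto (fun n => (1 - ρ₂ n) * b n / a n) atTop (𝓝 (2 * lam₂ ^ 2)))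
    (hne : lam₁ ≠ lam₂) (x y : ℝ) :
    Tendsto (fun n => μ.real {ω |
        ρ₁ n * |X ω| + √(1 - ρ₁ n ^ 2) * Y ω ≤ a n * x + b n + a n * log 2 ∧
        ρ₂ n * |X ω| + √(1 - ρ₂ n ^ 2) * Y ω ≤ a n * y + b n + a n * log 2} ^ n)
      atTop (𝓝 (exp (-huslerReissExponent |lam₁ - lam₂| x y))) := by
  obtain rfl : a = fun n => 1 / w (b n) := funext ha
  subst hX hY hG
  have h : IsPolarRepresentation μ R Θ := ⟨hRm, hΘm, hRpos, hΘunif, hindep⟩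
  obtain rfl : F = fun x => (μ.map R).real (Iic x) :=
    hF.trans (funext fun x => (map_measureReal_apply hRm measurableSet_Iic).symm)
  have := Measure.isProbabilityMeasure_map (μ := μ) hRm.aemeasurable
  have hg := isGumbelTail_of_upperEndpoint hw hendpoint hGumbel
  obtain ⟨_, _⟩ : l.NeBot ∧ l.IsCountablyGenerated := by
    rcases hendpoint with ⟨rfl, -⟩ | ⟨xF, rfl, -⟩ <;> constructor <;> infer_instance
  have hlim := h.tendsto_pow_skewProjection_le hg (h.eventually_measureReal_lt_mul_cos_eq hb)
    hρ₁ hρ₂ hlam₁ hlam₂ hne hHR₁ hHR₂ (x + log 2) (y + log 2)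
  rw [huslerReissExponent_add_add, exp_neg (log 2), exp_log two_pos,
    mul_inv_cancel_left₀ two_ne_zero] at hlim
  have hthreshold : ∀ n z, b n + (z + log 2) * (1 / w (b n)) =
      1 / w (b n) * z + b n + 1 / w (b n) * log 2 := fun n z => by ring
  simpa only [skewProjection, hthreshold] using hlim

theorem maxima_skew_gumbel_HuslerReiss
{Ω : Type*} [MeasurableSpace Ω] (μ : Measure Ω) [IsProbabilityMeasure μ]
    (R Θ : Ω → ℝ) (hRm : Measurable R) (hΘm : Measurable Θ)
    (hRpos : ∀ᵐ ω ∂μ, 0 < R ω)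
    (hΘunif : μ.map Θ = (ENNReal.ofReal (2 * π))⁻¹ • volume.restrict (Ioo (-π) π))
    (hindep : IndepFun R Θ μ)
    (X Y : Ω → ℝ)
    (hX : X = fun ω => R ω * Real.cos (Θ ω))
    (hY : Y = fun ω => R ω * Real.sin (Θ ω))
    (F G : ℝ → ℝ)
    (hF : F = fun x => (μ {ω | R ω ≤ x}).toReal)
    (hG : G = fun x => (μ {ω | X ω ≤ x}).toReal)
    (w : ℝ → ℝ) (hw : ∀ x, 0 < w x)
    (l : Filter ℝ)
    (hendpoint : (l = atTop ∧ ∀ x, F x < 1) ∨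
      (l = nhdsWithin 1 (Iio 1) ∧ (∀ x < 1, F x < 1) ∧ ∀ x, 1 ≤ x → F x = 1))
    (hGumbel : ∀ s : ℝ,
      Tendsto (fun u => (1 - F (u + s / w u)) / (1 - F u)) l (𝓝 (Real.exp (-s))))
    (b a : ℕ → ℝ)
    (hb : ∀ n : ℕ, b n = sInf {x | 1 - 1 / (n : ℝ) < G x})
    (ha : ∀ n : ℕ, a n = 1 / w (b n))
    (ρ₁ ρ₂ : ℕ → ℝ) (hρ₁ : ∀ n, ρ₁ n ∈ Ioc (0 : ℝ) 1) (hρ₂ : ∀ n, ρ₂ n ∈ Ioc (0 : ℝ) 1)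
    (lam₁ lam₂ : ℝ) (hlam₁ : 0 ≤ lam₁) (hlam₂ : 0 ≤ lam₂)
    (hHR₁ : Tendsto (fun n : ℕ => (1 - ρ₁ n) * b n / a n) atTop (𝓝 (2 * lam₁ ^ 2)))
    (hHR₂ : Tendsto (fun n : ℕ => (1 - ρ₂ n) * b n / a n) atTop (𝓝 (2 * lam₂ ^ 2)))
    (hne : 0 < |lam₁ - lam₂|) :
    ∀ x y : ℝ,
      Tendsto (fun n : ℕ =>
          ((μ {ω | ρ₁ n * |X ω| + Real.sqrt (1 - ρ₁ n ^ 2) * Y ω ≤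
              a n * x + b n + a n * Real.log 2 ∧
            ρ₂ n * |X ω| + Real.sqrt (1 - ρ₂ n ^ 2) * Y ω ≤
              a n * y + b n + a n * Real.log 2}).toReal) ^ n)
        atTop (𝓝
          (Real.exp (-(stdNormalCDF (|lam₁ - lam₂| + (x - y) / (2 * |lam₁ - lam₂|)) *
              Real.exp (-y) +
            stdNormalCDF (|lam₁ - lam₂| + (y - x) / (2 * |lam₁ - lam₂|)) *
              Real.exp (-x))))) := by
  exact maxima_skew_gumbel_HuslerReiss_general μ R Θ hRm hΘm hRpos hΘunif hindep X Y hX hY F G hF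
    hG w hw l (hendpoint.imp id fun h => ⟨1, h⟩) hGumbel b a hb ha ρ₁ ρ₂ (fun n => (hρ₁ n).2)
    (fun n => (hρ₂ n).2) lam₁ lam₂ hlam₁ hlam₂ hHR₁ hHR₂ (sub_ne_zero.1 (abs_pos.1 hne))
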